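/- Define R′(v,t) by: R′(b,t) = 0 and R′(r,t) = 1 for all t; R′(v,0) = 0 for v ∉ {b,r}; and R′(v,t) = (R′⁺(v,t−1) + R′⁻(v,t−1))/2 for v ∉ {b,r} and t > 0. Also define R(v,t) identically except that R(v,0) = 1 for v ∉ {b,r}. Then for every vertex v the limit R′(v) = lim_{t→∞} R′(v,t) exists, the function v ↦ R′(v) is a Richman cost function on D, and R′(v) = lim_{t→∞} R(v,t) for every v. -/

import Mathlib

open Relation Filter

variable {V : Type*}

/-- `fplus E f v` is `f⁺(v) = sup_{w ∈ S(v)} f(w)`, where `S(v)` is the set of successors of `v`. -/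
noncomputable def fplus (E : V → V → Prop) (f : V → ℝ) (v : V) : ℝ :=
  sSup (f '' {w | E v w})

/-- `fminus E f v` is `f⁻(v) = inf_{u ∈ S(v)} f(u)`. -/
noncomputable def fminus (E : V → V → Prop) (f : V → ℝ) (v : V) : ℝ :=
  sInf (f '' {w | E v w})

/-- A Richman cost function: `R : V → [0,1]`, `R(b) = 0`, `R(r) = 1`, and
`R(v) = (R⁺(v) + R⁻(v))/2` for every `v ∉ {b, r}`. -/
def IsRichman (E : V → V → Prop) (b r : V) (R : V → ℝ) : Prop :=
  (∀ v, R v ∈ Set.Icc (0 : ℝ) 1) ∧ R b = 0 ∧ R r = 1 ∧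
    ∀ v, v ≠ b → v ≠ r → R v = (fplus E R v + fminus E R v) / 2

/-- The auxiliary function `R(v,t)`: `R(b,t) = 0`, `R(r,t) = 1`, `R(v,0) = 1` for `v ∉ {b,r}`,
and `R(v,t) = (R⁺(v,t-1) + R⁻(v,t-1))/2` for `v ∉ {b,r}`, `t > 0`. -/
noncomputable def Rseq [DecidableEq V] (E : V → V → Prop) (b r : V) : ℕ → V → ℝ
  | 0 => fun v => if v = b then 0 else 1
  | t + 1 => fun v =>
      if v = b then 0
      else if v = r then 1
      else (fplus E (Rseq E b r t) v + fminus E (Rseq E b r t) v) / 2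

/-- The auxiliary function `R'(v,t)`: `R'(b,t) = 0`, `R'(r,t) = 1`, `R'(v,0) = 0` for `v ∉ {b,r}`,
and `R'(v,t) = (R'⁺(v,t-1) + R'⁻(v,t-1))/2` for `v ∉ {b,r}`, `t > 0`. -/
noncomputable def Rseq' [DecidableEq V] (E : V → V → Prop) (b r : V) : ℕ → V → ℝ
  | 0 => fun v => if v = r then 1 else 0
  | t + 1 => fun v =>
      if v = b then 0
      else if v = r then 1
      else (fplus E (Rseq' E b r t) v + fminus E (Rseq' E b r t) v) / 2

/-!
Both `R(·, t)` and `R'(·, t)` are orbits of the map which averages `f⁺` and `f⁻` off `{b, r}` and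
resets the boundary values. This map is monotone and continuous and preserves `[0, 1]`. The
starting point of `R'` is the least function with the right boundary values and that of `R` the
greatest, so one orbit increases, the other decreases, and both converge to fixed points, which are
the Richman cost functions.

The two limits agree because Richman cost functions satisfy a maximum principle: if `f - g` has a
positive maximum then, at a point where `(f - g, f)` is lexicographically maximal, `f` and `g` take
the same values at all successors, hence along a path to the boundary, where `f - g` vanishes.
-/

section Successors

open Set

variable (E : V → V → Prop) {v w : V} [Finite {w | E v w}]

theorem le_fplus (f : V → ℝ) (h : E v w) : f w ≤ fplus E f v :=
  le_csSup (toFinite {w | E v w} |>.image f).bddAbove (mem_image_of_mem f h)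

theorem fminus_le (f : V → ℝ) (h : E v w) : fminus E f v ≤ f w :=
  csInf_le (toFinite {w | E v w} |>.image f).bddBelow (mem_image_of_mem f h)

theorem exists_eq_fplus (f : V → ℝ) (h : ∃ w, E v w) : ∃ w, E v w ∧ f w = fplus E f v :=
  (Nonempty.image f h).csSup_mem (toFinite {w | E v w} |>.image f)

theorem exists_eq_fminus (f : V → ℝ) (h : ∃ w, E v w) : ∃ w, E v w ∧ f w = fminus E f v :=
  (Nonempty.image f h).csInf_mem (toFinite {w | E v w} |>.image f)

variable (v)

theorem fminus_le_fplus (f : V → ℝ) : fminus E f v ≤ fplus E f v :=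
  Real.sInf_le_sSup _ (toFinite {w | E v w} |>.image f).bddBelow
    (toFinite {w | E v w} |>.image f).bddAbove

-- Since `sSup ∅ = sInf ∅ = 0` in `ℝ`, both functionals are constant at a vertex with no successors.
theorem fplus_mono : Monotone fun f => fplus E f v := fun f g hfg => by
  simp only [fplus, sSup_image']
  exact ciSup_mono (Finite.bddAbove_range _) fun w => hfg w

theorem fminus_mono : Monotone fun f => fminus E f v := fun f g hfg => by
  simp only [fminus, sInf_image']
  exact ciInf_mono (Finite.bddBelow_range _) fun w => hfg w

theorem continuous_fplus : Continuous fun f => fplus E f v := by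
  have := Fintype.ofFinite {w | E v w}
  simp only [fplus, sSup_image']
  rcases isEmpty_or_nonempty {w | E v w} with _ | _
  · simp only [Real.iSup_of_isEmpty, continuous_const]
  · simp only [← Finset.sup'_univ_eq_ciSup]
    exact Continuous.finset_sup'_apply _ fun w _ => continuous_apply w.1

theorem continuous_fminus : Continuous fun f => fminus E f v := by
  have := Fintype.ofFinite {w | E v w}
  simp only [fminus, sInf_image']
  rcases isEmpty_or_nonempty {w | E v w} with _ | _
  · simp only [Real.iInf_of_isEmpty, continuous_const]
  · simp only [← Finset.inf'_univ_eq_ciInf]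
    exact Continuous.finset_inf'_apply _ fun w _ => continuous_apply w.1

theorem average_mem_Icc {f : V → ℝ} (hf : f ∈ Icc 0 1) :
    (fplus E f v + fminus E f v) / 2 ∈ Icc (0 : ℝ) 1 := by
  have fminus_nonneg : 0 ≤ fminus E f v :=
    Real.sInf_nonneg (forall_mem_image.2 fun w _ => hf.1 w)
  have fplus_le_one : fplus E f v ≤ 1 :=
    Real.sSup_le (forall_mem_image.2 fun w _ => hf.2 w) zero_le_one
  constructor <;> linarith [fminus_le_fplus E v f]

end Successors

section MaximumPrinciple

variable {E : V → V → Prop} {f g : V → ℝ}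

theorem eq_and_eq_of_lexMax {v w : V} [Finite {w | E v w}]
    (hf : f v ≤ (fplus E f v + fminus E f v) / 2)
    (hg : (fplus E g v + fminus E g v) / 2 ≤ g v)
    (hmax : ∀ w, E v w → toLex (f w - g w, f w) ≤ toLex (f v - g v, f v)) (hw : E v w) :
    f w = f v ∧ g w = g v := by
  have sub_le : ∀ u, E v u → f u - g u ≤ f v - g v := fun u hu =>
    Prod.Lex.monotone_fst _ _ (hmax u hu)
  have le_of_sub_eq : ∀ u, E v u → f u - g u = f v - g v → f u ≤ f v := fun u hu h => by
    simpa [Prod.Lex.toLex_le_toLex, h] using hmax u hu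
  obtain ⟨p, hp, hfp⟩ := exists_eq_fplus E f ⟨w, hw⟩
  obtain ⟨m, hm, hgm⟩ := exists_eq_fminus E g ⟨w, hw⟩
  have fplus_sub_le : fplus E f v - fplus E g v ≤ f p - g p := by
    linarith [le_fplus E g hp]
  have fminus_sub_le : fminus E f v - fminus E g v ≤ f m - g m := by
    linarith [fminus_le E f hm]
  -- The average of these two differences is at least `f v - g v`, and each is at most `f v - g v`.
  have fplus_sub_eq : fplus E f v - fplus E g v = f v - g v := by
    linarith [sub_le p hp, sub_le m hm]
  have fminus_sub_eq : fminus E f v - fminus E g v = f v - g v := by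
    linarith [sub_le p hp, sub_le m hm]
  have fplus_le : fplus E f v ≤ f v :=
    hfp ▸ le_of_sub_eq p hp (by linarith [sub_le p hp])
  have fplus_eq : fplus E f v = f v := by linarith [fminus_le_fplus E v f]
  have fminus_eq : fminus E f v = f v := by linarith
  constructor
  · linarith [le_fplus E f hw, fminus_le E f hw, fplus_eq, fminus_eq]
  · linarith [le_fplus E g hw, fminus_le E g hw, fplus_sub_eq, fminus_sub_eq]

theorem le_of_le_average_of_average_le [Finite V] {B : Set V}
    (hf : ∀ v ∉ B, f v ≤ (fplus E f v + fminus E f v) / 2)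
    (hg : ∀ v ∉ B, (fplus E g v + fminus E g v) / 2 ≤ g v)
    (hB : ∀ v, ∃ u ∈ B, ReflTransGen E v u) (hfg : ∀ v ∈ B, f v ≤ g v) : f ≤ g := by
  intro v
  have : Nonempty V := ⟨v⟩
  obtain ⟨a, ha⟩ := Finite.exists_max fun w => toLex (f w - g w, f w)
  obtain ⟨u, huB, hau⟩ := hB a
  have sub_le : f v - g v ≤ f a - g a := Prod.Lex.monotone_fst _ _ (ha v)
  by_contra! hv
  have eq_of_reachable : ∀ x, ReflTransGen E a x → f x = f a ∧ g x = g a := fun x hx => by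
    induction hx with
    | refl => exact ⟨rfl, rfl⟩
    | @tail x y _ hxy ih =>
      obtain ⟨hfx, hgx⟩ := ih
      have hxB : x ∉ B := fun hxB => by linarith [hfg x hxB]
      have hmax : ∀ w, E x w → toLex (f w - g w, f w) ≤ toLex (f x - g x, f x) := fun w _ => by
        simpa only [hfx, hgx] using ha w
      simpa only [hfx, hgx] using eq_and_eq_of_lexMax (hf x hxB) (hg x hxB) hmax hxy
  obtain ⟨hfu, hgu⟩ := eq_of_reachable u hau
  linarith [hfg u huB]

theorem IsRichman.le [Finite V] {b r : V} (hreach : ∀ v, ReflTransGen E v b ∨ ReflTransGen E v r)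
    (hf : IsRichman E b r f) (hg : IsRichman E b r g) : f ≤ g := by
  obtain ⟨-, hfb, hfr, hf⟩ := hf
  obtain ⟨-, hgb, hgr, hg⟩ := hg
  have interior : ∀ v ∉ ({b, r} : Set V), v ≠ b ∧ v ≠ r := fun v hv => by
    simpa only [Set.mem_insert_iff, Set.mem_singleton_iff, not_or] using hv
  exact le_of_le_average_of_average_le
    (fun v hv => (hf v (interior v hv).1 (interior v hv).2).le)
    (fun v hv => (hg v (interior v hv).1 (interior v hv).2).ge)
    (fun v => by simpa using hreach v) (by simp [hfb, hfr, hgb, hgr])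

theorem IsRichman.eq [Finite V] {b r : V} (hreach : ∀ v, ReflTransGen E v b ∨ ReflTransGen E v r)
    (hf : IsRichman E b r f) (hg : IsRichman E b r g) : f = g :=
  (hf.le hreach hg).antisymm (hg.le hreach hf)

end MaximumPrinciple

section Recursion

open Function Set Topology

variable [DecidableEq V] (E : V → V → Prop) (b r : V)

/-- The map whose orbits are the sequences `R(·, t)` and `R'(·, t)`: it averages `f⁺` and `f⁻` off
`{b, r}`, and sets the value at `b` to `0` and the value at `r` to `1`, whatever `f` is there. -/
noncomputable def richmanStep (f : V → ℝ) (v : V) : ℝ :=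
  if v = b then 0 else if v = r then 1 else (fplus E f v + fminus E f v) / 2

theorem Rseq_eq_iterate (t : ℕ) : Rseq E b r t = (richmanStep E b r)^[t] (Rseq E b r 0) := by
  induction t with
  | zero => rfl
  | succ t ih => rw [iterate_succ_apply', ← ih]; rfl

theorem Rseq'_eq_iterate (t : ℕ) : Rseq' E b r t = (richmanStep E b r)^[t] (Rseq' E b r 0) := by
  induction t with
  | zero => rfl
  | succ t ih => rw [iterate_succ_apply', ← ih]; rfl

theorem Rseq_zero_mem_Icc : Rseq E b r 0 ∈ Icc 0 1 := by
  constructor <;> intro v <;> simp only [Rseq] <;> split_ifs <;> simp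

theorem Rseq'_zero_mem_Icc : Rseq' E b r 0 ∈ Icc 0 1 := by
  constructor <;> intro v <;> simp only [Rseq'] <;> split_ifs <;> simp

section LocallyFinite

variable [∀ v, Finite {w | E v w}]

theorem richmanStep_mono : Monotone (richmanStep E b r) := fun f g hfg v => by
  unfold richmanStep
  split_ifs
  · rfl
  · rfl
  · gcongr
    exacts [fplus_mono E v hfg, fminus_mono E v hfg]

theorem continuous_richmanStep : Continuous (richmanStep E b r) := by
  refine continuous_pi fun v => ?_
  unfold richmanStep
  split_ifs
  · exact continuous_const
  · exact continuous_const
  · exact ((continuous_fplus E v).add (continuous_fminus E v)).div_const 2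

theorem mapsTo_richmanStep_Icc : MapsTo (richmanStep E b r) (Icc 0 1) (Icc 0 1) := fun f hf => by
  have mem_Icc (v : V) : richmanStep E b r f v ∈ Icc (0 : ℝ) 1 := by
    unfold richmanStep
    split_ifs
    exacts [unitInterval.zero_mem, unitInterval.one_mem, average_mem_Icc E v hf]
  exact ⟨fun v => (mem_Icc v).1, fun v => (mem_Icc v).2⟩

end LocallyFinite

variable {E b r}

theorem le_Rseq_zero {f : V → ℝ} (hf : f ≤ 1) (hfb : f b = 0) : f ≤ Rseq E b r 0 := fun v => by
  simp only [Rseq]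
  split_ifs with hv
  · exact (hv ▸ hfb).le
  · exact hf v

theorem Rseq'_zero_le {f : V → ℝ} (hf : 0 ≤ f) (hfr : f r = 1) : Rseq' E b r 0 ≤ f := fun v => by
  simp only [Rseq']
  split_ifs with hv
  · exact (hv ▸ hfr).ge
  · exact hf v

theorem richmanStep_left (f : V → ℝ) : richmanStep E b r f b = 0 := if_pos rfl

theorem richmanStep_right (f : V → ℝ) (hbr : b ≠ r) : richmanStep E b r f r = 1 := by
  simp only [richmanStep, if_neg hbr.symm, if_true]

theorem isRichman_of_isFixedPt {f : V → ℝ} (hbr : b ≠ r) (hf : f ∈ Icc 0 1)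
    (hfix : IsFixedPt (richmanStep E b r) f) : IsRichman E b r f := by
  refine ⟨fun v => ⟨hf.1 v, hf.2 v⟩, ?_, ?_, fun v hvb hvr => ?_⟩
  · rw [← hfix, richmanStep_left]
  · rw [← hfix, richmanStep_right f hbr]
  · conv_lhs => rw [← hfix]
    simp only [richmanStep, if_neg hvb, if_neg hvr]

variable [∀ v, Finite {w | E v w}]

theorem isRichman_of_tendsto_iterate {f R : V → ℝ} (hbr : b ≠ r) (hf : f ∈ Icc 0 1)
    (hR : Tendsto (fun t => (richmanStep E b r)^[t] f) atTop (𝓝 R)) : IsRichman E b r R :=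
  have iterate_mem_Icc t := (mapsTo_richmanStep_Icc E b r).iterate t hf
  isRichman_of_isFixedPt hbr (isClosed_Icc.mem_of_tendsto hR (.of_forall iterate_mem_Icc))
    (isFixedPt_of_tendsto_iterate hR (continuous_richmanStep E b r).continuousAt)

theorem exists_isRichman_tendsto_Rseq (hbr : b ≠ r) :
    ∃ R, IsRichman E b r R ∧ Tendsto (Rseq E b r) atTop (𝓝 R) := by
  have maps := mapsTo_richmanStep_Icc E b r
  have zero_mem := Rseq_zero_mem_Icc E b r
  have step_le : richmanStep E b r (Rseq E b r 0) ≤ Rseq E b r 0 :=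
    le_Rseq_zero (maps zero_mem).2 (richmanStep_left _)
  have lim := tendsto_atTop_ciInf ((richmanStep_mono E b r).antitone_iterate_of_map_le step_le)
    ⟨0, forall_mem_range.2 fun t => (maps.iterate t zero_mem).1⟩
  exact ⟨_, isRichman_of_tendsto_iterate hbr zero_mem lim,
    lim.congr fun t => (Rseq_eq_iterate E b r t).symm⟩

theorem exists_isRichman_tendsto_Rseq' (hbr : b ≠ r) :
    ∃ R, IsRichman E b r R ∧ Tendsto (Rseq' E b r) atTop (𝓝 R) := by
  have maps := mapsTo_richmanStep_Icc E b r
  have zero_mem := Rseq'_zero_mem_Icc E b r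
  have le_step : Rseq' E b r 0 ≤ richmanStep E b r (Rseq' E b r 0) :=
    Rseq'_zero_le (maps zero_mem).1 (richmanStep_right _ hbr)
  have lim := tendsto_atTop_ciSup ((richmanStep_mono E b r).monotone_iterate_of_le_map le_step)
    ⟨1, forall_mem_range.2 fun t => (maps.iterate t zero_mem).2⟩
  exact ⟨_, isRichman_of_tendsto_iterate hbr zero_mem lim,
    lim.congr fun t => (Rseq'_eq_iterate E b r t).symm⟩

end Recursion

/-- The limit `R'(v) = lim_{t→∞} R'(v,t)` exists, `v ↦ R'(v)` is a Richman cost function,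
and it coincides with `lim_{t→∞} R(v,t)` for every `v`. -/
theorem Rseq'_tendsto_richman_eq [Fintype V] [DecidableEq V] (E : V → V → Prop) (b r : V)
    (hbr : b ≠ r)
    (hreach : ∀ v, ReflTransGen E v b ∨ ReflTransGen E v r) :
    ∃ R' : V → ℝ,
      (∀ v, Tendsto (fun t => Rseq' E b r t v) atTop (nhds (R' v))) ∧
      IsRichman E b r R' ∧
      (∀ v, Tendsto (fun t => Rseq E b r t v) atTop (nhds (R' v))) := by
  obtain ⟨R', hR', tendsto_Rseq'⟩ := exists_isRichman_tendsto_Rseq' (E := E) hbr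
  obtain ⟨R, hR, tendsto_Rseq⟩ := exists_isRichman_tendsto_Rseq (E := E) hbr
  obtain rfl : R' = R := hR'.eq hreach hR
  exact ⟨R', tendsto_pi_nhds.1 tendsto_Rseq', hR', tendsto_pi_nhds.1 tendsto_Rseq⟩
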